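/- Let w be a positive even integer and let E be an odd weighted Dedekind symbol of weight w whose reciprocity function is a polynomial, i.e. there exists a homogeneous polynomial g(X,Y) of degree w with complex coefficients such that E(h,k) − E(k,−h) = g(h,k) for all h,k ∈ ℤ⁺. Then E is a linear combination of the symbols E_{w,n} for even n with 0 < n < w; that is, there exist constants c_n ∈ ℂ (n even, 0<n<w) such that E(h,k) = Σ_{0<n<w, n even} c_n·E_{w,n}(h,k) for all (h,k) ∈ ℤ⁺×ℤ. -/

import Mathlib

open scoped Classical
open MvPolynomial

/-- A weighted Dedekind symbol of weight `w`. -/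
def IsDedekindSymbol (w : ℕ) (E : ℤ → ℤ → ℂ) : Prop :=
  (∀ h k : ℤ, 0 < h → E h (k + h) = E h k) ∧
  (∀ h k c : ℤ, 0 < h → 0 < c → E (c * h) (c * k) = (c : ℂ) ^ w * E h k)

/-- The `m`-th Bernoulli function `B̄_m(x) = B_m(x − ⌊x⌋)` (ℂ-valued, rational argument). -/
noncomputable def Bbar (m : ℕ) (x : ℚ) : ℂ :=
  ((Polynomial.bernoulli m).eval (x - ⌊x⌋) : ℚ)

/-- The `m`-th Bernoulli polynomial evaluated at a complex number. -/
noncomputable def Bpoly (m : ℕ) (x : ℂ) : ℂ :=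
  Polynomial.aeval x (Polynomial.bernoulli m)

/-- The `m`-th Bernoulli number `B_m = B_m(0)`. -/
noncomputable def Bnum (m : ℕ) : ℂ := ((bernoulli m : ℚ) : ℂ)

/-- The finite sum `I_{w,n}(h,k) = (1/2)·∑ sgn(k/h+b/a)·(ak+bh)^{w-n}·(ck+dh)^n`,
over quadruples `(a,b,c,d) ∈ ℤ⁴` with `ad−bc = 1`, `a ≠ 0`, `c ≠ 0`,
`|b+⌊k/h+1/2⌋a| ≤ |a| ≤ h`, `|d+⌊k/h+1/2⌋c| ≤ |c| ≤ h` and `(k/h+b/a)(k/h+d/c) < 0`;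
the factor `1/2` accounts for the quotient of `SL(2,ℤ)` by `±1`. -/
noncomputable def Iwn (w n : ℕ) (h k : ℤ) : ℂ :=
  (1 / 2) * ∑ᶠ p : ℤ × ℤ × ℤ × ℤ,
    if p.1 * p.2.2.2 - p.2.1 * p.2.2.1 = 1 ∧ p.1 ≠ 0 ∧ p.2.2.1 ≠ 0 ∧
        |p.2.1 + ⌊(k : ℚ) / h + 1 / 2⌋ * p.1| ≤ |p.1| ∧ |p.1| ≤ h ∧
        |p.2.2.2 + ⌊(k : ℚ) / h + 1 / 2⌋ * p.2.2.1| ≤ |p.2.2.1| ∧ |p.2.2.1| ≤ h ∧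
        ((k : ℚ) / h + p.2.1 / p.1) * ((k : ℚ) / h + p.2.2.2 / p.2.2.1) < 0 then
      (Real.sign ((k : ℝ) / h + (p.2.1 : ℝ) / p.1) : ℂ) *
        ((p.1 * k + p.2.1 * h : ℤ) : ℂ) ^ (w - n) * ((p.2.2.1 * k + p.2.2.2 * h : ℤ) : ℂ) ^ n
    else 0

/-- `E_{w,n}` for even `n`. -/
noncomputable def EwnEven (w n : ℕ) (h k : ℤ) : ℂ :=
  Iwn w n h k + Bbar (n + 1) ((k : ℚ) / h) / ((n : ℂ) + 1) * (h : ℂ) ^ w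
    - Bbar (w - n + 1) ((k : ℚ) / h) / (((w - n : ℕ) : ℂ) + 1) * (h : ℂ) ^ w

/-!
For an odd symbol `E` the reciprocity law reads `g(h, k) = E(h, k) + E(k, h)`, whence `g` is
symmetric and satisfies the three-term relation `g(x, y) = g(x, x + y) + g(y, x + y)`. By the latter,
`g(x, y) + g(x, -y)` is invariant under `x ↦ x + y`, which forces it to vanish: `g` is a form of even
degree that is odd in each variable.

Adding to `E` the polynomial `(g(h, h - k) - g(h, k)) / 3` produces a function that changes under a
step of the Euclidean algorithm by an antisymmetric form `P` which is even in both variables.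
Unfolding the algorithm therefore expresses it as the sum of `P(a u - b v, d v - c u)` over the
nodes of the Stern–Brocot tree above the slope `u / v = k / (h - k)`. Now `P` is a combination of
the forms `x ^ (w - n) y ^ n - y ^ (w - n) x ^ n` with `n` even and `0 < n < w`. For each of them
the tree sum is `I_{w,n}(h, k)`: rotation by a right angle permutes the quadruples indexing
`I_{w,n}`, and the tree is one quadrant of them. The polynomial that was added is, at `h = 1`, the
solution of a difference equation with right-hand side a combination of `t ^ n - t ^ (w - n)`, that
is, a combination of Bernoulli polynomials.
-/

/-! ### Polynomials in two variables -/

theorem eval_mul_of_isHomogeneous {σ R : Type*} [CommSemiring R] {p : MvPolynomial σ R} {n : ℕ}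
    (hp : p.IsHomogeneous n) (t : R) (x : σ → R) :
    eval (fun i => t * x i) p = t ^ n * eval x p := by
  simp only [eval_eq, Finset.mul_sum]
  refine Finset.sum_congr rfl fun d hd => ?_
  simp only [mul_pow, Finset.prod_mul_distrib, Finset.prod_pow_eq_pow_sum,
    hp.degree_eq_sum_deg_support hd]
  ring

theorem exists_eval_eq_sum_of_isHomogeneous {R : Type*} [CommSemiring R]
    {p : MvPolynomial (Fin 2) R} {w : ℕ} (hp : p.IsHomogeneous w) :
    ∃ c : ℕ → R, ∀ x y : R,
      eval ![x, y] p = ∑ n ∈ Finset.range (w + 1), c n * (x ^ (w - n) * y ^ n) := by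
  refine ⟨fun n => ∑ d ∈ p.support with d 1 = n, coeff d p, fun x y => ?_⟩
  have degree_add : ∀ d ∈ p.support, d 0 + d 1 = w := fun d hd => by
    simpa [Finsupp.weight_apply, Finsupp.sum_fintype] using hp (mem_support_iff.mp hd)
  rw [eval_eq', ← Finset.sum_fiberwise_of_maps_to (g := fun d => d 1)
    fun d hd => Finset.mem_range_succ_iff.mpr (Nat.le.intro (add_comm (d 0) _ ▸ degree_add d hd))]
  refine Finset.sum_congr rfl fun n _ => ?_
  rw [Finset.sum_mul]
  refine Finset.sum_congr rfl fun d hd => ?_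
  obtain ⟨hd_support, hdn⟩ := Finset.mem_filter.mp hd
  rw [← degree_add d hd_support, ← hdn, Nat.add_sub_cancel, Fin.prod_univ_two]
  rfl

theorem eq_of_eval_eq_of_pos_int {R : Type*} [CommRing R] [IsDomain R] [CharZero R]
    {p q : MvPolynomial (Fin 2) R}
    (hpq : ∀ h k : ℤ, 0 < h → 0 < k → eval ![(h : R), (k : R)] p = eval ![(h : R), (k : R)] q) :
    p = q := by
  refine MvPolynomial.funext_set (fun _ => Int.cast '' Set.Ioi (0 : ℤ))
    (fun _ => (Set.Ioi_infinite 0).image Int.cast_injective.injOn) fun x hx => ?_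
  obtain ⟨h, hh, hx₀⟩ := hx 0 trivial
  obtain ⟨k, hk, hx₁⟩ := hx 1 trivial
  have : x = ![(h : R), (k : R)] := by ext i; fin_cases i <;> simp [hx₀, hx₁]
  rw [this, hpq h k hh hk]

theorem eval_bind₁_pair {R : Type*} [CommSemiring R] (v : Fin 2 → R)
    (p q g : MvPolynomial (Fin 2) R) :
    eval v (bind₁ ![p, q] g) = eval ![eval v p, eval v q] g := by
  rw [eval, eval₂Hom_bind₁]
  congr 2
  ext i
  fin_cases i <;> rfl

theorem eval_aeval_pair {R : Type*} [CommSemiring R] (t : R) (p q : Polynomial R)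
    (g : MvPolynomial (Fin 2) R) :
    (aeval ![p, q] g).eval t = eval ![p.eval t, q.eval t] g := by
  rw [← Polynomial.coe_aeval_eq_eval, comp_aeval_apply, ← coe_aeval_eq_eval,
    RingHom.coe_coe]
  congr 2
  ext i
  fin_cases i <;> rfl

theorem eval_eq_of_eval_add_one_eq {R : Type*} [CommRing R] [IsDomain R] [CharZero R]
    {p : Polynomial R} (hp : ∀ t, p.eval (t + 1) = p.eval t) (t s : R) : p.eval t = p.eval s := by
  have eval_natCast (n : ℕ) : p.eval (n : R) = p.eval 0 := by
    induction n with
    | zero => simp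
    | succ n ih => rw [Nat.cast_succ, hp, ih]
  have : p = Polynomial.C (p.eval 0) :=
    Polynomial.eq_of_infinite_eval_eq _ _ <|
      (Set.infinite_range_of_injective Nat.cast_injective).mono <| by
        rintro _ ⟨n, rfl⟩
        simp [eval_natCast n]
  rw [this, Polynomial.eval_C, Polynomial.eval_C]

/-! ### The functional equations of the reciprocity function -/

/-- The binary forms of degree `w` that satisfy the functional equations of the reciprocity function
`g(h, k) = E(h, k) + E(k, h)` of an odd Dedekind symbol `E`. -/
structure IsReciprocityForm {R : Type*} [CommRing R] (w : ℕ) (g : MvPolynomial (Fin 2) R) :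
    Prop where
  isHomogeneous : g.IsHomogeneous w
  eval_swap (x y : R) : eval ![x, y] g = eval ![y, x] g
  eval_three_term (x y : R) : eval ![x, y] g = eval ![x, x + y] g + eval ![y, x + y] g

namespace IsReciprocityForm

section Form

variable {R : Type*} [CommRing R] {w : ℕ} {g : MvPolynomial (Fin 2) R}

theorem eval_self (hg : IsReciprocityForm w g) (x : R) :
    eval ![x, x] g = 0 := by
  have three_term := hg.eval_three_term x 0
  rw [add_zero] at three_term
  linear_combination -three_term - hg.eval_swap 0 x

theorem eval_mul (hg : IsReciprocityForm w g) (t x y : R) :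
    eval ![t * x, t * y] g = t ^ w * eval ![x, y] g := by
  convert eval_mul_of_isHomogeneous hg.isHomogeneous t ![x, y] using 3
  ext i
  fin_cases i <;> rfl

theorem eval_neg_neg (hg : IsReciprocityForm w g) (hw : Even w) (x y : R) :
    eval ![-x, -y] g = eval ![x, y] g := by
  simpa [hw.neg_one_pow] using hg.eval_mul (-1) x y

theorem eval_add_eval_neg_shift (hg : IsReciprocityForm w g) (x y : R) :
    eval ![x + y, y] g + eval ![x + y, -y] g = eval ![x, y] g + eval ![x, -y] g := by
  have three_term_neg := hg.eval_three_term (x + y) (-y)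
  rw [add_neg_cancel_right] at three_term_neg
  linear_combination three_term_neg - hg.eval_three_term x y - hg.eval_swap x (x + y)
    + hg.eval_swap (-y) x + hg.eval_swap (x + y) y

end Form

section Field

variable {K : Type*} [Field K] [CharZero K] {w : ℕ} {g : MvPolynomial (Fin 2) K}

theorem eval_add_eval_neg_eq_of_ne_zero (hg : IsReciprocityForm w g) (hw : Even w) (x : K)
    {y : K} (hy : y ≠ 0) :
    eval ![x, y] g + eval ![x, -y] g = 2 * eval ![y, 0] g := by
  let S : Polynomial K := aeval ![.C y * .X, .C y] g + aeval ![.C y * .X, .C (-y)] g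
  have eval_S (t : K) : S.eval t = eval ![y * t, y] g + eval ![y * t, -y] g := by
    simp only [S, Polynomial.eval_add, eval_aeval_pair, Polynomial.eval_mul, Polynomial.eval_C,
      Polynomial.eval_X]
  have periodic (t : K) : S.eval (t + 1) = S.eval t := by
    rw [eval_S, eval_S, mul_add, mul_one, hg.eval_add_eval_neg_shift]
  have const := eval_eq_of_eval_add_one_eq periodic (x / y) 0
  rw [eval_S, eval_S, mul_div_cancel₀ x hy, mul_zero] at const
  have neg_y := hg.eval_neg_neg hw 0 y
  rw [neg_zero] at neg_y
  linear_combination const + neg_y + 2 * hg.eval_swap 0 y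

theorem eval_zero_right (hg : IsReciprocityForm w g) (hw : Even w) (hw₀ : 0 < w) (x : K) :
    eval ![x, 0] g = 0 := by
  have even_at_one_two := hg.eval_add_eval_neg_eq_of_ne_zero hw 1 (two_ne_zero (α := K))
  have even_at_two_one := hg.eval_add_eval_neg_eq_of_ne_zero hw 2 (one_ne_zero (α := K))
  have neg_swap := hg.eval_neg_neg hw 2 (-1)
  rw [neg_neg, hg.eval_swap] at neg_swap
  have two_pow_mul := hg.eval_mul 2 1 0
  have mul_x := hg.eval_mul x 1 0
  rw [mul_one, mul_zero] at two_pow_mul mul_x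
  have two_pow_ne_one : (2 : K) ^ w ≠ 1 := mod_cast (Nat.one_lt_two_pow hw₀.ne').ne'
  have : ((2 : K) ^ w - 1) * eval ![1, 0] g = 0 := by
    linear_combination (even_at_two_one - even_at_one_two + hg.eval_swap 1 2 + neg_swap) / 2
      - two_pow_mul
  rw [mul_x, (mul_eq_zero.mp this).resolve_left (sub_ne_zero.mpr two_pow_ne_one), mul_zero]

theorem eval_neg_right (hg : IsReciprocityForm w g) (hw : Even w) (hw₀ : 0 < w) (x y : K) :
    eval ![x, -y] g = -eval ![x, y] g := by
  by_cases hy : y = 0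
  · simp [hy, hg.eval_zero_right hw hw₀]
  · linear_combination hg.eval_add_eval_neg_eq_of_ne_zero hw x hy +
      2 * hg.eval_zero_right hw hw₀ y

end Field

end IsReciprocityForm

/-! ### The even form and the correction term -/

/-- The antisymmetrization of the monomial `x ^ (w - n) * y ^ n` of degree `w`. -/
def skewMonomial {R : Type*} [CommRing R] (w n : ℕ) (x y : R) : R :=
  x ^ (w - n) * y ^ n - y ^ (w - n) * x ^ n

/-- The set of even degrees `n` with `0 < n < w`. -/
def evenDegrees (w : ℕ) : Finset ℕ := (Finset.range w).filter fun n => 0 < n ∧ Even n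

theorem mem_evenDegrees {w n : ℕ} : n ∈ evenDegrees w ↔ n < w ∧ 0 < n ∧ Even n := by
  rw [evenDegrees, Finset.mem_filter, Finset.mem_range]

/-- `(g(x, x - y) + g(x, x + y)) / 3`. For a reciprocity form `g` this is an antisymmetric form,
even in both variables, and it is the defect of the Euclidean recursion satisfied by
`E + correction g`. -/
noncomputable def evenForm {K : Type*} [Field K] (g : MvPolynomial (Fin 2) K) (x y : K) : K :=
  (eval ![x, x - y] g + eval ![x, x + y] g) / 3

/-- `(g(h, h - k) - g(h, k)) / 3`, the polynomial correction that turns an odd symbol `E` with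
reciprocity function `g` into a function whose Euclidean recursion has the even defect `evenForm g`.
Its values are combinations of Bernoulli polynomials in `k / h`. -/
noncomputable def correction {K : Type*} [Field K] (g : MvPolynomial (Fin 2) K) (h k : K) : K :=
  (eval ![h, h - k] g - eval ![h, k] g) / 3

theorem evenForm_neg_right {K : Type*} [Field K] (g : MvPolynomial (Fin 2) K) (x y : K) :
    evenForm g x (-y) = evenForm g x y := by
  simp only [evenForm, sub_neg_eq_add, ← sub_eq_add_neg, add_comm]

theorem correction_sub_right {K : Type*} [Field K] (g : MvPolynomial (Fin 2) K) (h k : K) :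
    correction g h (h - k) = -correction g h k := by
  simp only [correction, sub_sub_cancel]
  ring

theorem exists_evenForm_eq_sum_range {K : Type*} [Field K] {w : ℕ} {g : MvPolynomial (Fin 2) K}
    (hg : g.IsHomogeneous w) :
    ∃ c : ℕ → K, ∀ x y : K,
      evenForm g x y = ∑ n ∈ Finset.range (w + 1), c n * (x ^ (w - n) * y ^ n) := by
  have isHomogeneous_bind₁ (p q : MvPolynomial (Fin 2) K) (hp : p.IsHomogeneous 1)
      (hq : q.IsHomogeneous 1) : (bind₁ ![p, q] g).IsHomogeneous w := by
    simpa using hg.aeval ![p, q] (n := 1) fun i => by fin_cases i <;> assumption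
  have hX (i : Fin 2) : (X i : MvPolynomial (Fin 2) K).IsHomogeneous 1 := isHomogeneous_X K i
  obtain ⟨c, hc⟩ := exists_eval_eq_sum_of_isHomogeneous <|
    (isHomogeneous_bind₁ _ _ (hX 0) ((hX 0).sub (hX 1))).add
      (isHomogeneous_bind₁ _ _ (hX 0) ((hX 0).add (hX 1)))
  refine ⟨fun n => c n / 3, fun x y => ?_⟩
  have expansion := hc x y
  simp only [map_add, map_sub, eval_bind₁_pair, eval_X, Matrix.cons_val_zero,
    Matrix.cons_val_one] at expansion
  simp only [evenForm, expansion, div_mul_eq_mul_div, Finset.sum_div]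

/-- Only the average of the expansion over `y ↦ -y` matters, which kills the odd degrees. -/
theorem exists_evenForm_eq_sum_even {K : Type*} [Field K] [CharZero K] {w : ℕ}
    {g : MvPolynomial (Fin 2) K} (hg : g.IsHomogeneous w) :
    ∃ c : ℕ → K, ∀ x y : K, evenForm g x y =
      ∑ n ∈ Finset.range (w + 1) with Even n, c n * (x ^ (w - n) * y ^ n) := by
  obtain ⟨c, hc⟩ := exists_evenForm_eq_sum_range hg
  refine ⟨c, fun x y => ?_⟩
  calc evenForm g x y = (evenForm g x y + evenForm g x (-y)) / 2 := by
        rw [evenForm_neg_right, add_self_div_two]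
    _ = ∑ n ∈ Finset.range (w + 1), c n * (x ^ (w - n) * ((y ^ n + (-y) ^ n) / 2)) := by
        rw [hc, hc, ← Finset.sum_add_distrib, Finset.sum_div]
        exact Finset.sum_congr rfl fun n _ => by ring
    _ = _ := by
        rw [Finset.sum_filter]
        refine Finset.sum_congr rfl fun n _ => ?_
        split_ifs with hn
        · rw [hn.neg_pow, add_self_div_two]
        · rw [(Nat.not_even_iff_odd.mp hn).neg_pow, add_neg_cancel, zero_div, mul_zero, mul_zero]

namespace IsReciprocityForm

section AnyCharacteristic

variable {K : Type*} [Field K] {w : ℕ} {g : MvPolynomial (Fin 2) K}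

theorem evenForm_one_zero (hg : IsReciprocityForm w g) : evenForm g 1 0 = 0 := by
  simp [evenForm, hg.eval_self]

theorem correction_mul (hg : IsReciprocityForm w g) (t h k : K) :
    correction g (t * h) (t * k) = t ^ w * correction g h k := by
  simp only [correction, ← mul_sub, hg.eval_mul]
  ring

end AnyCharacteristic

variable {K : Type*} [Field K] [CharZero K] {w : ℕ} {g : MvPolynomial (Fin 2) K}

theorem correction_zero_right (hg : IsReciprocityForm w g) (hw : Even w) (hw₀ : 0 < w) (h : K) :
    correction g h 0 = 0 := by
  simp [correction, hg.eval_self, hg.eval_zero_right hw hw₀]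

theorem evenForm_swap (hg : IsReciprocityForm w g) (hw : Even w) (hw₀ : 0 < w) (x y : K) :
    evenForm g x y = -evenForm g y x := by
  have three_term := hg.eval_three_term (x - y) y
  rw [sub_add_cancel] at three_term
  have odd := hg.eval_neg_right hw hw₀ y (x - y)
  rw [neg_sub] at odd
  simp only [evenForm, add_comm y x]
  linear_combination (odd - three_term - hg.eval_three_term x y - hg.eval_swap (x - y) x -
    hg.eval_swap y x - hg.eval_swap y (x - y)) / 3

theorem exists_evenForm_eq_sum (hg : IsReciprocityForm w g) (hw : Even w) (hw₀ : 0 < w) :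
    ∃ b : ℕ → K, ∀ x y : K,
      evenForm g x y = ∑ n ∈ evenDegrees w, b n * skewMonomial w n x y := by
  obtain ⟨c, hc⟩ := exists_evenForm_eq_sum_even hg.isHomogeneous
  have c_zero : c 0 = 0 := by
    have expansion := hc 1 0
    rw [hg.evenForm_one_zero, Finset.sum_eq_single 0 (fun n _ hn => by simp [hn]) (by simp)]
      at expansion
    simpa using expansion.symm
  have c_top : c w = 0 := by
    have expansion := hc 0 1
    rw [hg.evenForm_swap hw hw₀, hg.evenForm_one_zero, Finset.sum_eq_single w ?_ (by simp [hw])]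
      at expansion
    · simpa using expansion.symm
    · intro n hn hnw
      have : w - n ≠ 0 := by have := Finset.mem_range.mp (Finset.mem_filter.mp hn).1; omega
      rw [zero_pow this, zero_mul, mul_zero]
  refine ⟨fun n => c n / 2, fun x y => ?_⟩
  calc evenForm g x y = (evenForm g x y - evenForm g y x) / 2 := by
        linear_combination hg.evenForm_swap hw hw₀ x y / 2
    _ = ∑ n ∈ Finset.range (w + 1) with Even n,
          c n / 2 * skewMonomial w n x y := by
        rw [hc, hc, ← Finset.sum_sub_distrib, Finset.sum_div]
        exact Finset.sum_congr rfl fun n _ => by rw [skewMonomial]; ring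
    _ = _ := by
        symm
        refine Finset.sum_subset (fun n hn => ?_) fun n hn hn' => ?_
        · obtain ⟨hnw, -, hn_even⟩ := mem_evenDegrees.mp hn
          exact Finset.mem_filter.mpr ⟨Finset.mem_range.mpr (by omega), hn_even⟩
        · obtain ⟨hnw, hn_even⟩ := Finset.mem_filter.mp hn
          obtain rfl | rfl : n = 0 ∨ n = w := by
            by_contra! h
            exact hn' (mem_evenDegrees.mpr
              ⟨by have := Finset.mem_range.mp hnw; omega, by omega, hn_even⟩)
          · simp only [c_zero, zero_div, zero_mul]
          · simp only [c_top, zero_div, zero_mul]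

/-- With `F(u, v) = E(u + v, u) + correction g (u + v) u`, the reciprocity law gives
`E(u + v, u) - E(v, u) = g(u + v, u) - g(u, v)`, so this says `F(u, v) - F(u, v - u)` is even. -/
theorem eval_sub_eval_add_correction_sub (hg : IsReciprocityForm w g) (hw : Even w) (hw₀ : 0 < w)
    (u v : K) :
    eval ![u + v, u] g - eval ![u, v] g + correction g (u + v) u - correction g v u =
      evenForm g u v := by
  rw [hg.evenForm_swap hw hw₀]
  simp only [evenForm, correction, add_sub_cancel_left, add_comm v u]
  linear_combination (hg.eval_swap (u + v) u * 2 - hg.eval_three_term u v * 2 -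
    hg.eval_swap v (u + v) + hg.eval_swap v u) / 3

end IsReciprocityForm

/-! ### Bernoulli polynomials -/

theorem Bpoly_add_one (n : ℕ) (x : ℂ) :
    Bpoly (n + 1) (x + 1) = Bpoly (n + 1) x + (n + 1) * x ^ n := by
  have := congrArg (Polynomial.aeval x) (Polynomial.bernoulli_comp_one_add_X (n + 1))
  simpa [Bpoly, Polynomial.aeval_comp, add_comm (1 : ℂ)] using this

theorem Bpoly_zero_of_odd {n : ℕ} (hn : Odd n) (hn₁ : 1 < n) : Bpoly n 0 = 0 := by
  rw [Bpoly, Polynomial.aeval_def, Polynomial.eval₂_at_zero, Polynomial.coeff_zero_eq_eval_zero,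
    Polynomial.bernoulli_eval_zero, bernoulli_eq_zero_of_odd hn hn₁, map_zero]

theorem Bbar_sub_intCast (m : ℕ) (x : ℚ) (j : ℤ) : Bbar m (x - j) = Bbar m x := by
  rw [Bbar, Bbar, Int.floor_sub_intCast, Int.cast_sub, sub_sub_sub_cancel_right]

theorem Bbar_eq_Bpoly (m : ℕ) {x : ℚ} (hx₀ : 0 ≤ x) (hx₁ : x < 1) : Bbar m x = Bpoly m x := by
  rw [Bbar, Int.floor_eq_zero_iff.mpr ⟨hx₀, hx₁⟩, Int.cast_zero, sub_zero, Bpoly]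
  exact (Polynomial.aeval_algebraMap_apply_eq_algebraMap_eval x _).symm

theorem Bbar_neg {m : ℕ} (hm : Odd m) (hm₁ : 1 < m) (x : ℚ) : Bbar m (-x) = -Bbar m x := by
  unfold Bbar
  rw [← Int.fract, ← Int.fract]
  by_cases hx : Int.fract x = 0
  · rw [hx, Int.fract_neg_eq_zero.mpr hx, Polynomial.bernoulli_eval_zero,
      bernoulli_eq_zero_of_odd hm hm₁, Rat.cast_zero, neg_zero]
  · rw [Int.fract_neg hx, Polynomial.bernoulli_eval_one_sub, hm.neg_one_pow, neg_one_mul,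
      Rat.cast_neg]

/-- The Bernoulli-polynomial part of the symbol `E_{w,n}`, normalized to `h = 1`. -/
noncomputable def bernoulliPart (w n : ℕ) (t : ℂ) : ℂ :=
  Bpoly (n + 1) t / (n + 1) - Bpoly (w - n + 1) t / ((w - n : ℕ) + 1)

theorem bernoulliPart_add_one (w n : ℕ) (t : ℂ) :
    bernoulliPart w n (t + 1) = bernoulliPart w n t + (t ^ n - t ^ (w - n)) := by
  have hn : (n : ℂ) + 1 ≠ 0 := n.cast_add_one_ne_zero
  have hwn : ((w - n : ℕ) : ℂ) + 1 ≠ 0 := (w - n).cast_add_one_ne_zero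
  rw [bernoulliPart, bernoulliPart, Bpoly_add_one, Bpoly_add_one]
  field_simp
  ring

theorem bernoulliPart_zero {w n : ℕ} (hw : Even w) (hn : n ∈ evenDegrees w) :
    bernoulliPart w n 0 = 0 := by
  obtain ⟨hnw, hn₀, hn_even⟩ := mem_evenDegrees.mp hn
  have hwn_even : Even (w - n) := hw.tsub hn_even
  rw [bernoulliPart, Bpoly_zero_of_odd hn_even.add_one (by omega),
    Bpoly_zero_of_odd hwn_even.add_one (by omega), zero_div, zero_div, sub_zero]

theorem exists_polynomial_eval_eq_bernoulliPart (w n : ℕ) :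
    ∃ p : Polynomial ℂ, ∀ t, p.eval t = bernoulliPart w n t :=
  ⟨.C (n + 1 : ℂ)⁻¹ * (Polynomial.bernoulli (n + 1)).map (algebraMap ℚ ℂ) -
    .C ((w - n : ℕ) + 1 : ℂ)⁻¹ * (Polynomial.bernoulli (w - n + 1)).map (algebraMap ℚ ℂ),
    fun t => by
      simp only [bernoulliPart, Bpoly, Polynomial.eval_sub, Polynomial.eval_mul, Polynomial.eval_C,
        Polynomial.eval_map_algebraMap, inv_mul_eq_div]⟩

namespace IsReciprocityForm

theorem correction_one_add_one {K : Type*} [Field K] [CharZero K] {w : ℕ}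
    {g : MvPolynomial (Fin 2) K} (hg : IsReciprocityForm w g) (hw : Even w) (hw₀ : 0 < w) (t : K) :
    correction g 1 (t + 1) = correction g 1 t - evenForm g 1 t := by
  have odd := hg.eval_neg_right hw hw₀ 1 t
  simp only [correction, evenForm, add_comm t 1, sub_add_cancel_left]
  linear_combination odd / 3

variable {w : ℕ} {g : MvPolynomial (Fin 2) ℂ}

/-- Both sides are polynomials in `t` that vanish at `0` and have the same increment under
`t ↦ t + 1`. -/
theorem correction_one_eq_sum (hg : IsReciprocityForm w g) (hw : Even w) (hw₀ : 0 < w)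
    {b : ℕ → ℂ}
    (hb : ∀ x y : ℂ, evenForm g x y = ∑ n ∈ evenDegrees w, b n * skewMonomial w n x y) (t : ℂ) :
    correction g 1 t = -∑ n ∈ evenDegrees w, b n * bernoulliPart w n t := by
  choose B hB using exists_polynomial_eval_eq_bernoulliPart w
  let f : Polynomial ℂ := .C 3⁻¹ * (aeval ![1, 1 - .X] g - aeval ![1, .X] g) +
    ∑ n ∈ evenDegrees w, .C (b n) * B n
  have eval_f (s : ℂ) : f.eval s =
      correction g 1 s + ∑ n ∈ evenDegrees w, b n * bernoulliPart w n s := by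
    simp only [f, correction, hB, eval_aeval_pair, Polynomial.eval_add, Polynomial.eval_mul,
      Polynomial.eval_sub, Polynomial.eval_C, Polynomial.eval_X, Polynomial.eval_one,
      Polynomial.eval_finsetSum, inv_mul_eq_div]
  have periodic (s : ℂ) : f.eval (s + 1) = f.eval s := by
    rw [eval_f, eval_f, hg.correction_one_add_one hw hw₀, hb, sub_add_eq_add_sub, sub_eq_iff_eq_add,
      add_assoc, ← Finset.sum_add_distrib]
    simp only [bernoulliPart_add_one, skewMonomial, one_pow, one_mul, mul_one, mul_add]
  have f_zero : f.eval 0 = 0 := by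
    rw [eval_f, hg.correction_zero_right hw hw₀, zero_add]
    exact Finset.sum_eq_zero fun n hn => by rw [bernoulliPart_zero hw hn, mul_zero]
  rw [← add_eq_zero_iff_eq_neg, ← eval_f, eval_eq_of_eval_add_one_eq periodic t 0, f_zero]

end IsReciprocityForm

/-! ### Sums over the Stern–Brocot tree -/

theorem euclid_induction {C : ℤ → ℤ → Prop} (zero : ∀ v, 0 < v → C 0 v)
    (swap : ∀ u v, 0 < u + v → C u v → C v u)
    (sub : ∀ u v, 0 < u → u ≤ v → C u (v - u) → C u v) {u v : ℤ} (hu : 0 ≤ u) (hv : 0 ≤ v)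
    (huv : 0 < u + v) : C u v := by
  have of_le (s : ℕ) : ∀ u v : ℤ, 0 ≤ u → u ≤ v → u + v = s → 0 < u + v → C u v := by
    induction s using Nat.strong_induction_on with
    | _ s ih =>
      intro u v hu huv hs hpos
      obtain rfl | hu := hu.eq_or_lt
      · exact zero v (by omega)
      · refine sub u v hu huv ?_
        obtain hle | hle := le_total u (v - u)
        · exact ih v.toNat (by omega) u (v - u) hu.le hle (by omega) (by omega)
        · exact swap _ _ (by omega)
            (ih v.toNat (by omega) (v - u) u (by omega) hle (by omega) (by omega))
  obtain hle | hle := le_total u v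
  · exact of_le (u + v).toNat u v hu hle (by omega) huv
  · exact swap v u (by omega) (of_le (u + v).toNat v u hv hle (by omega) (by omega))

/-- The matrices in `SL₂(ℤ)` with nonnegative entries `a, b, c, d` for which `a * u - b * v` and
`d * v - c * u` are both positive, that is, the nodes of the Stern–Brocot tree above the slope
`u / v`, with `(a, b, c, d)` standing for the rows `(a, b)` and `(c, d)`. -/
def sternBrocot (u v : ℤ) : Set (ℤ × ℤ × ℤ × ℤ) :=
  {(a, b, c, d) | 0 ≤ a ∧ 0 ≤ b ∧ 0 ≤ c ∧ 0 ≤ d ∧ a * d - b * c = 1 ∧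
    0 < a * u - b * v ∧ 0 < d * v - c * u}

theorem mem_sternBrocot {u v a b c d : ℤ} : (a, b, c, d) ∈ sternBrocot u v ↔
    0 ≤ a ∧ 0 ≤ b ∧ 0 ≤ c ∧ 0 ≤ d ∧ a * d - b * c = 1 ∧ 0 < a * u - b * v ∧ 0 < d * v - c * u :=
  Iff.rfl

section SternBrocot

variable {u v : ℤ}

theorem pos_of_mem_sternBrocot {a b c d : ℤ} (hx : (a, b, c, d) ∈ sternBrocot u v) :
    0 < a ∧ 0 < d := by
  obtain ⟨ha, hb, hc, hd, hdet, -, -⟩ := mem_sternBrocot.mp hx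
  have had : 0 < a * d := by have := mul_nonneg hb hc; omega
  exact ⟨pos_of_mul_pos_left had hd, pos_of_mul_pos_right had ha⟩

theorem row_sum_le_of_mem_sternBrocot {a b c d : ℤ} (hx : (a, b, c, d) ∈ sternBrocot u v) :
    a + b ≤ u + v ∧ c + d ≤ u + v := by
  obtain ⟨ha, hb, hc, hd, hdet, hL, hR⟩ := mem_sternBrocot.mp hx
  have decomposition : u + v = (c + d) * (a * u - b * v) + (a + b) * (d * v - c * u) := by
    linear_combination -(u + v) * hdet
  have hab : 0 ≤ a + b := add_nonneg ha hb
  have hcd : 0 ≤ c + d := add_nonneg hc hd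
  have row_a_le : a + b ≤ (a + b) * (d * v - c * u) := le_mul_of_one_le_right hab hR
  have row_c_le : c + d ≤ (c + d) * (a * u - b * v) := le_mul_of_one_le_right hcd hL
  constructor <;> linarith

theorem finite_sternBrocot (u v : ℤ) : (sternBrocot u v).Finite := by
  let I := Set.Icc 0 (u + v)
  have hI : I.Finite := Set.finite_Icc _ _
  refine (hI.prod (hI.prod (hI.prod hI))).subset ?_
  rintro ⟨a, b, c, d⟩ hx
  obtain ⟨hab, hcd⟩ := row_sum_le_of_mem_sternBrocot hx
  obtain ⟨ha, hb, hc, hd, -⟩ := mem_sternBrocot.mp hx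
  simp only [I, Set.mem_prod, Set.mem_Icc]
  omega

theorem sternBrocot_zero_left : sternBrocot 0 v = ∅ := by
  refine Set.eq_empty_of_forall_notMem ?_
  rintro ⟨a, b, c, d⟩ ⟨-, hb, -, hd, -, hL, hR⟩
  have hv : 0 < v := pos_of_mul_pos_right (b := v) (a := d) (by linarith) hd
  linarith [mul_nonneg hb hv.le]

theorem sternBrocot_eq_insert (hu : 0 < u) (huv : u ≤ v) :
    sternBrocot u v = insert (1, 0, 0, 1)
      ((fun (a, b, c, d) => (a + b, b, c + d, d)) '' sternBrocot u (v - u)) := by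
  ext ⟨a, b, c, d⟩
  simp only [Set.mem_insert_iff, Set.mem_image, Prod.exists, Prod.mk.injEq, mem_sternBrocot]
  constructor
  · rintro ⟨ha, hb, hc, hd, hdet, hL, hR⟩
    have hab : b < a := by
      by_contra! hab
      nlinarith [mul_le_mul_of_nonneg_right hab hu.le, mul_le_mul_of_nonneg_left huv hb]
    by_cases hcd : d ≤ c
    · exact .inr ⟨a - b, b, c - d, d, ⟨by omega, hb, by omega, hd, by linarith, by linarith,
        by linarith⟩, by ring, rfl, by ring, rfl⟩
    · left
      have : (b + 1) * (c + 1) ≤ a * d := mul_le_mul (by omega) (by omega) (by omega) ha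
      obtain rfl : b = 0 := by nlinarith
      obtain rfl : c = 0 := by nlinarith
      have had : a * d = 1 := by linarith
      obtain rfl : a = 1 := Int.eq_one_of_mul_eq_one_right ha had
      exact ⟨rfl, rfl, rfl, by linarith⟩
  · rintro (⟨rfl, rfl, rfl, rfl⟩ | ⟨a, b, c, d, ⟨ha, hb, hc, hd, hdet, hL, hR⟩, rfl, rfl, rfl, rfl⟩)
    · omega
    · exact ⟨by omega, hb, by omega, hd, by linarith, by linarith, by linarith⟩

theorem bijOn_sternBrocot_swap (u v : ℤ) :
    Set.BijOn (fun (a, b, c, d) => (d, c, b, a)) (sternBrocot u v) (sternBrocot v u) := by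
  have mapsTo (u v : ℤ) :
      Set.MapsTo (fun (a, b, c, d) => (d, c, b, a)) (sternBrocot u v) (sternBrocot v u) := by
    rintro ⟨a, b, c, d⟩ ⟨ha, hb, hc, hd, hdet, hL, hR⟩
    exact ⟨hd, hc, hb, ha, by linarith, hR, hL⟩
  exact Set.InvOn.bijOn ⟨fun _ _ => rfl, fun _ _ => rfl⟩ (mapsTo u v) (mapsTo v u)

theorem finsum_sternBrocot_eq_add {M : Type*} [AddCommMonoid M] (P : ℤ → ℤ → M)
    (hu : 0 < u) (huv : u ≤ v) :
    ∑ᶠ x ∈ sternBrocot u v, P (x.1 * u - x.2.1 * v) (x.2.2.2 * v - x.2.2.1 * u) =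
      P u v + ∑ᶠ x ∈ sternBrocot u (v - u),
        P (x.1 * u - x.2.1 * (v - u)) (x.2.2.2 * (v - u) - x.2.2.1 * u) := by
  have root_notMem : (1, 0, 0, 1) ∉
      (fun (a, b, c, d) => (a + b, b, c + d, d)) '' sternBrocot u (v - u) := by
    rintro ⟨⟨a, b, c, d⟩, ⟨-, -, hc, -⟩, hx⟩
    simp only [Prod.mk.injEq] at hx
    omega
  rw [sternBrocot_eq_insert hu huv,
    finsum_mem_insert _ root_notMem ((finite_sternBrocot _ _).image _), finsum_mem_image]
  · simp only [one_mul, zero_mul, sub_zero]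
    congr! 5 <;> ring
  · rintro ⟨a, b, c, d⟩ - ⟨a', b', c', d'⟩ - h
    simp only [Prod.mk.injEq] at h ⊢
    omega

theorem finsum_sternBrocot_swap {M : Type*} [AddCommGroup M] {P : ℤ → ℤ → M}
    (hP : ∀ u v, P u v = -P v u) (u v : ℤ) :
    ∑ᶠ x ∈ sternBrocot u v, P (x.1 * u - x.2.1 * v) (x.2.2.2 * v - x.2.2.1 * u) =
      -∑ᶠ x ∈ sternBrocot v u, P (x.1 * v - x.2.1 * u) (x.2.2.2 * u - x.2.2.1 * v) := by
  rw [← finsum_mem_neg_distrib _ (finite_sternBrocot v u)]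
  exact finsum_mem_eq_of_bijOn _ (bijOn_sternBrocot_swap u v) fun _ _ => hP _ _

theorem finsum_sternBrocot_eq {M : Type*} [AddCommGroup M] {F P : ℤ → ℤ → M}
    (F_zero : ∀ v, 0 < v → F 0 v = 0) (F_swap : ∀ u v, 0 < u + v → F u v = -F v u)
    (P_swap : ∀ u v, P u v = -P v u)
    (F_sub : ∀ u v, 0 < u → u ≤ v → F u v = P u v + F u (v - u))
    (hu : 0 ≤ u) (hv : 0 ≤ v) (huv : 0 < u + v) :
    ∑ᶠ x ∈ sternBrocot u v, P (x.1 * u - x.2.1 * v) (x.2.2.2 * v - x.2.2.1 * u) = F u v := by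
  refine euclid_induction (C := fun u v => ∑ᶠ x ∈ sternBrocot u v,
    P (x.1 * u - x.2.1 * v) (x.2.2.2 * v - x.2.2.1 * u) = F u v) ?_ ?_ ?_ hu hv huv
  · intro v hv
    rw [sternBrocot_zero_left, finsum_mem_empty, F_zero v hv]
  · intro u v huv ih
    rw [finsum_sternBrocot_swap P_swap, ih, F_swap v u (add_comm u v ▸ huv)]
  · intro u v hu huv ih
    rw [finsum_sternBrocot_eq_add P hu huv, ih, F_sub u v hu huv]

end SternBrocot

/-! ### The quadruples indexing `I_{w,n}` -/

/-- The quadruples indexing the sum `I_{w,n}(h, k)` when `⌊k / h + 1 / 2⌋ = 0`, with the sign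
condition cleared of denominators. -/
def admissible (h k : ℤ) : Set (ℤ × ℤ × ℤ × ℤ) :=
  {(a, b, c, d) | a * d - b * c = 1 ∧ a ≠ 0 ∧ c ≠ 0 ∧ |b| ≤ |a| ∧ |a| ≤ h ∧ |d| ≤ |c| ∧ |c| ≤ h ∧
    (a * k + b * h) * a * ((c * k + d * h) * c) < 0}

/-- The summand of `I_{w,n}(h, k)` at the quadruple `(a, b, c, d)`. -/
noncomputable def admissibleTerm (w n : ℕ) (h k : ℤ) : ℤ × ℤ × ℤ × ℤ → ℂ := fun (a, b, c, d) =>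
  (Int.sign ((a * k + b * h) * a) : ℂ) * ((a * k + b * h : ℤ) : ℂ) ^ (w - n) *
    ((c * k + d * h : ℤ) : ℂ) ^ n

/-- The sum `I_{w,n}(h, k)` without the recentring of `k` modulo `h`, so that
`Iwn w n h k = admissibleSum w n h (k - m * h)` for `m = ⌊k / h + 1 / 2⌋`. -/
noncomputable def admissibleSum (w n : ℕ) (h k : ℤ) : ℂ :=
  (1 / 2) * ∑ᶠ p ∈ admissible h k, admissibleTerm w n h k p

theorem mem_admissible {h k a b c d : ℤ} : (a, b, c, d) ∈ admissible h k ↔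
    a * d - b * c = 1 ∧ a ≠ 0 ∧ c ≠ 0 ∧ |b| ≤ |a| ∧ |a| ≤ h ∧ |d| ≤ |c| ∧ |c| ≤ h ∧
      (a * k + b * h) * a * ((c * k + d * h) * c) < 0 :=
  Iff.rfl

theorem finite_admissible (h k : ℤ) : (admissible h k).Finite := by
  let I := Set.Icc (-h) h
  have hI : I.Finite := Set.finite_Icc _ _
  refine (hI.prod (hI.prod (hI.prod hI))).subset ?_
  rintro ⟨a, b, c, d⟩ ⟨-, -, -, hb, ha, hd, hc, -⟩
  exact ⟨abs_le.mp ha, abs_le.mp (hb.trans ha), abs_le.mp hc, abs_le.mp (hd.trans hc)⟩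

theorem sign_div_of_pos {x y : ℝ} (hy : 0 < y) : Real.sign (x / y) = Real.sign x := by
  obtain hx | rfl | hx := lt_trichotomy x 0
  · rw [Real.sign_of_neg hx, Real.sign_of_neg (div_neg_of_neg_of_pos hx hy)]
  · rw [zero_div]
  · rw [Real.sign_of_pos hx, Real.sign_of_pos (div_pos hx hy)]

theorem sign_div_add_div {h a : ℤ} (hh : 0 < h) (ha : a ≠ 0) (k b : ℤ) :
    Real.sign ((k : ℝ) / h + (b : ℝ) / a) = (Int.sign ((a * k + b * h) * a) : ℤ) := by
  have : (0 : ℝ) < h := mod_cast hh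
  have ha' : (a : ℝ) ≠ 0 := mod_cast ha
  have clear_denominators :
      (k : ℝ) / h + b / a = ((a * k + b * h) * a : ℤ) / (h * a ^ 2 : ℝ) := by
    push_cast
    field_simp
  rw [clear_denominators, sign_div_of_pos (by positivity), Real.sign_intCast]

theorem div_add_div_mul_neg_iff {h a c : ℤ} (hh : 0 < h) (ha : a ≠ 0) (hc : c ≠ 0) (k b d : ℤ) :
    ((k : ℚ) / h + b / a) * ((k : ℚ) / h + d / c) < 0 ↔
      (a * k + b * h) * a * ((c * k + d * h) * c) < 0 := by
  have : (0 : ℚ) < h := mod_cast hh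
  have ha' : (a : ℚ) ≠ 0 := mod_cast ha
  have hc' : (c : ℚ) ≠ 0 := mod_cast hc
  have clear_denominators : ((k : ℚ) / h + b / a) * ((k : ℚ) / h + d / c) =
      ((a * k + b * h) * a * ((c * k + d * h) * c) : ℤ) / (h ^ 2 * a ^ 2 * c ^ 2) := by
    push_cast
    field_simp
  rw [clear_denominators, div_lt_iff₀ (by positivity), zero_mul, Int.cast_lt_zero]

/-- The shear `(a, b, c, d) ↦ (a, b - m * a, c, d - m * c)`, which moves `k` to `k - m * h` in the
linear forms `a * k + b * h` and `c * k + d * h`. -/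
def shear (m : ℤ) : ℤ × ℤ × ℤ × ℤ ≃ ℤ × ℤ × ℤ × ℤ where
  toFun := fun (a, b, c, d) => (a, b - m * a, c, d - m * c)
  invFun := fun (a, b, c, d) => (a, b + m * a, c, d + m * c)
  left_inv _ := by simp
  right_inv _ := by simp

theorem Iwn_eq_admissibleSum (w n : ℕ) {h : ℤ} (hh : 0 < h) (k : ℤ) :
    Iwn w n h k = admissibleSum w n h (k - ⌊(k : ℚ) / h + 1 / 2⌋ * h) := by
  unfold Iwn admissibleSum
  congr 1
  generalize ⌊(k : ℚ) / h + 1 / 2⌋ = m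
  rw [← finsum_comp_equiv (shear m), finsum_mem_def]
  refine finsum_congr fun ⟨a, b, c, d⟩ => ?_
  rw [Set.indicator_apply]
  by_cases ha : a = 0
  · simp [ha, mem_admissible, shear]
  by_cases hc : c = 0
  · simp [hc, mem_admissible, shear]
  have form_a : a * k + (b - m * a) * h = a * (k - m * h) + b * h := by ring
  have form_c : c * k + (d - m * c) * h = c * (k - m * h) + d * h := by ring
  have det : a * (d - m * c) - (b - m * a) * c = a * d - b * c := by ring
  refine if_congr ?_ ?_ rfl
  · simp only [shear, Equiv.coe_fn_mk, mem_admissible]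
    rw [div_add_div_mul_neg_iff hh ha hc, form_a, form_c, det, sub_add_cancel, sub_add_cancel]
  · simp only [shear, Equiv.coe_fn_mk, admissibleTerm]
    rw [sign_div_add_div hh ha, form_a, form_c, Complex.ofReal_intCast]

/-- Conjugation by `diag(1, -1)`, which moves `k` to `-k`. -/
def reflect : ℤ × ℤ × ℤ × ℤ ≃ ℤ × ℤ × ℤ × ℤ where
  toFun := fun (a, b, c, d) => (a, -b, -c, d)
  invFun := fun (a, b, c, d) => (a, -b, -c, d)
  left_inv _ := by simp
  right_inv _ := by simp

/-- Left multiplication by the rotation of order four. -/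
def rotate : ℤ × ℤ × ℤ × ℤ ≃ ℤ × ℤ × ℤ × ℤ where
  toFun := fun (a, b, c, d) => (-c, -d, a, b)
  invFun := fun (a, b, c, d) => (c, d, -a, -b)
  left_inv _ := by simp
  right_inv _ := by simp

theorem reflect_mem_admissible_iff {h k : ℤ} {p : ℤ × ℤ × ℤ × ℤ} :
    reflect p ∈ admissible h (-k) ↔ p ∈ admissible h k := by
  obtain ⟨a, b, c, d⟩ := p
  have form_a : a * -k + -b * h = -(a * k + b * h) := by ring
  have form_c : -c * -k + d * h = c * k + d * h := by ring
  simp only [reflect, Equiv.coe_fn_mk, mem_admissible]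
  rw [form_a, form_c]
  simp only [abs_neg, neg_mul, mul_neg, neg_ne_zero, neg_neg]

theorem admissibleTerm_reflect {w n : ℕ} (hwn : Even (w - n)) (h k : ℤ) (p : ℤ × ℤ × ℤ × ℤ) :
    admissibleTerm w n h (-k) (reflect p) = -admissibleTerm w n h k p := by
  obtain ⟨a, b, c, d⟩ := p
  have form_a : a * -k + -b * h = -(a * k + b * h) := by ring
  have form_c : -c * -k + d * h = c * k + d * h := by ring
  simp only [reflect, Equiv.coe_fn_mk, admissibleTerm]
  rw [form_a, form_c]
  simp only [neg_mul, Int.sign_neg, Int.cast_neg, hwn.neg_pow]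

theorem admissibleSum_neg {w n : ℕ} (hwn : Even (w - n)) (h k : ℤ) :
    admissibleSum w n h (-k) = -admissibleSum w n h k := by
  rw [admissibleSum, admissibleSum, ← mul_neg, ← finsum_mem_neg_distrib _ (finite_admissible h k)]
  congr 1
  exact (finsum_mem_eq_of_bijOn reflect
    (Equiv.bijOn reflect fun _ => reflect_mem_admissible_iff)
    fun p _ => (admissibleTerm_reflect hwn h k p).symm).symm

theorem rotate_mem_admissible_iff {h k : ℤ} {p : ℤ × ℤ × ℤ × ℤ} :
    rotate p ∈ admissible h k ↔ p ∈ admissible h k := by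
  obtain ⟨a, b, c, d⟩ := p
  have form_c : -c * k + -d * h = -(c * k + d * h) := by ring
  have det : -c * b - -d * a = a * d - b * c := by ring
  simp only [rotate, Equiv.coe_fn_mk, mem_admissible]
  rw [form_c, det, neg_mul_neg, abs_neg, abs_neg, neg_ne_zero, mul_comm ((c * k + d * h) * c)]
  tauto

theorem admissibleTerm_rotate_rotate {w n : ℕ} (hn : Even n) (hwn : Even (w - n)) (h k : ℤ)
    (p : ℤ × ℤ × ℤ × ℤ) :
    admissibleTerm w n h k (rotate (rotate p)) = admissibleTerm w n h k p := by
  obtain ⟨a, b, c, d⟩ := p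
  have form (a b : ℤ) : -a * k + -b * h = -(a * k + b * h) := by ring
  simp only [rotate, Equiv.coe_fn_mk, admissibleTerm]
  rw [form, form, neg_mul_neg, Int.cast_neg, Int.cast_neg, hn.neg_pow, hwn.neg_pow]

theorem finsum_mem_eq_finsum_mem_inter_add {α M : Type*} [AddCommMonoid M] {s t : Set α}
    (hs : s.Finite) (e : α ≃ α) (e_mem : ∀ x, e x ∈ s ↔ x ∈ s)
    (e_compl : ∀ x ∈ s, e x ∈ t ↔ x ∉ t) (f : α → M) :
    ∑ᶠ x ∈ s, f x = ∑ᶠ x ∈ s ∩ t, (f x + f (e x)) := by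
  have bijOn : Set.BijOn e (s ∩ t) (s \ t) := Equiv.bijOn e fun x => by
    rw [Set.mem_sdiff, Set.mem_inter_iff, e_mem]
    exact and_congr_right fun hx => by rw [e_compl x hx, not_not]
  rw [finsum_mem_add_distrib (hs.inter_of_left t),
    finsum_mem_eq_of_bijOn (g := f) e bijOn fun _ _ => rfl, finsum_mem_inter_add_sdiff t hs]

/-- The change of coordinates that identifies `sternBrocot k (h - k)` with the quadrant
`c < 0 < a` of `admissible h k`. -/
def toQuadrant : ℤ × ℤ × ℤ × ℤ ≃ ℤ × ℤ × ℤ × ℤ where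
  toFun := fun (a, b, c, d) => (a + b, -b, -(c + d), d)
  invFun := fun (a, b, c, d) => (a + b, -b, -(c + d), d)
  left_inv _ := by simp
  right_inv _ := by simp

theorem toQuadrant_mem_admissible {h k : ℤ} {p : ℤ × ℤ × ℤ × ℤ} (hp : p ∈ sternBrocot k (h - k)) :
    toQuadrant p ∈ admissible h k ∩ {p | p.1 * p.2.2.1 < 0} ∩ {p | 0 < p.1} := by
  obtain ⟨a, b, c, d⟩ := p
  obtain ⟨ha, hd⟩ := pos_of_mem_sternBrocot hp
  obtain ⟨hab, hcd⟩ := row_sum_le_of_mem_sternBrocot hp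
  obtain ⟨-, hb, hc, -, hdet, hL, hR⟩ := mem_sternBrocot.mp hp
  have row_a : 0 < a + b := by omega
  have row_c : 0 < c + d := by omega
  refine ⟨⟨mem_admissible.mpr ⟨by linarith, by omega, by omega, ?_, ?_, ?_, ?_, ?_⟩, ?_⟩, row_a⟩
  · rw [abs_neg, abs_of_nonneg hb, abs_of_pos row_a]
    omega
  · rw [abs_of_pos row_a]
    omega
  · rw [abs_neg, abs_of_pos hd, abs_of_pos row_c]
    omega
  · rw [abs_neg, abs_of_pos row_c]
    omega
  · have := mul_pos (mul_pos hL row_a) (mul_pos hR row_c)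
    linarith
  · exact mul_neg_of_pos_of_neg row_a (neg_neg_of_pos row_c)

theorem forms_pos_of_mem_admissible {h k a b c d : ℤ} (hh : 0 < h)
    (hp : (a, b, c, d) ∈ admissible h k) (ha : 0 < a) (hc : c < 0) :
    0 < a * k + b * h ∧ 0 < c * k + d * h := by
  obtain ⟨hdet, -, -, -, -, -, -, hneg⟩ := mem_admissible.mp hp
  have wronskian : a * (c * k + d * h) + -c * (a * k + b * h) = h := by
    linear_combination h * hdet
  have same_sign : 0 < (a * k + b * h) * (c * k + d * h) := by
    refine pos_of_mul_neg_right (a := a * c) ?_ (mul_neg_of_pos_of_neg ha hc).le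
    linarith
  obtain pos | ⟨hL, hR⟩ := mul_pos_iff.mp same_sign
  · exact pos
  · nlinarith

theorem toQuadrant_mem_sternBrocot {h k : ℤ} (hh : 0 < h) (hk : 0 ≤ k) {p : ℤ × ℤ × ℤ × ℤ}
    (hp : p ∈ admissible h k) (hac : p.1 * p.2.2.1 < 0) (ha : 0 < p.1) :
    toQuadrant p ∈ sternBrocot k (h - k) := by
  obtain ⟨a, b, c, d⟩ := p
  have hc : c < 0 := neg_of_mul_neg_right hac ha.le
  obtain ⟨hL, hR⟩ := forms_pos_of_mem_admissible hh hp ha hc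
  obtain ⟨hdet, -, -, hab, -, hcd, -, -⟩ := mem_admissible.mp hp
  dsimp only at ha
  have hd : 0 < d := by
    by_contra! hd
    nlinarith
  have hb : b ≤ 0 := by
    by_contra! hb
    nlinarith
  rw [abs_of_nonpos hb, abs_of_pos ha] at hab
  rw [abs_of_pos hd, abs_of_neg hc] at hcd
  refine mem_sternBrocot.mpr ⟨?_, ?_, ?_, ?_, ?_, ?_, ?_⟩ <;> linarith

theorem admissibleTerm_toQuadrant_add_rotate {w n : ℕ} (hwn : Even (w - n))
    {h k a b c d : ℤ} (hp : (a, b, c, d) ∈ sternBrocot k (h - k)) :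
    admissibleTerm w n h k (toQuadrant (a, b, c, d)) +
      admissibleTerm w n h k (rotate (toQuadrant (a, b, c, d))) =
    skewMonomial w n ((a * k - b * (h - k) : ℤ) : ℂ) ((d * (h - k) - c * k : ℤ) : ℂ) := by
  obtain ⟨ha, hd⟩ := pos_of_mem_sternBrocot hp
  obtain ⟨-, hb, hc, -, -, hL, hR⟩ := mem_sternBrocot.mp hp
  have form_a : (a + b) * k + -b * h = a * k - b * (h - k) := by ring
  have form_c : -(c + d) * k + d * h = d * (h - k) - c * k := by ring
  have form_c' : - -(c + d) * k + -d * h = -(d * (h - k) - c * k) := by ring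
  simp only [toQuadrant, rotate, Equiv.coe_fn_mk, admissibleTerm, skewMonomial]
  rw [form_a, form_c, form_c', neg_neg, neg_mul, Int.sign_neg,
    Int.sign_eq_one_of_pos (mul_pos hL (by omega)), Int.sign_eq_one_of_pos (mul_pos hR (by omega)),
    Int.cast_neg (d * (h - k) - c * k), hwn.neg_pow]
  push_cast
  ring

theorem bijOn_toQuadrant {h k : ℤ} (hh : 0 < h) (hk : 0 ≤ k) :
    Set.BijOn toQuadrant (sternBrocot k (h - k))
      (admissible h k ∩ {p | p.1 * p.2.2.1 < 0} ∩ {p | 0 < p.1}) :=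
  Set.InvOn.bijOn (f' := toQuadrant)
    ⟨fun p _ => toQuadrant.left_inv p, fun p _ => toQuadrant.right_inv p⟩
    (fun _ hp => toQuadrant_mem_admissible hp)
    fun _ hp => toQuadrant_mem_sternBrocot hh hk hp.1.1 hp.1.2 hp.2

/-- The group of order four generated by `rotate` acts freely on `admissible h k`, and every orbit
meets the quadrant `c < 0 < a` exactly once. -/
theorem finsum_admissible_eq_finsum_quadrant {M : Type*} [AddCommMonoid M] (h k : ℤ)
    (f : ℤ × ℤ × ℤ × ℤ → M) :
    ∑ᶠ p ∈ admissible h k, f p =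
      ∑ᶠ p ∈ admissible h k ∩ {p | p.1 * p.2.2.1 < 0} ∩ {p | 0 < p.1},
        (f p + f (rotate p) + (f (rotate (rotate p)) + f (rotate (rotate (rotate p))))) := by
  have finite := finite_admissible h k
  have rotate_compl : ∀ p ∈ admissible h k,
      rotate p ∈ {p : ℤ × ℤ × ℤ × ℤ | p.1 * p.2.2.1 < 0} ↔ p ∉ {p | p.1 * p.2.2.1 < 0} := by
    rintro ⟨a, b, c, d⟩ ⟨-, ha, hc, -⟩
    have hac : a * c ≠ 0 := mul_ne_zero ha hc
    simp only [rotate, Equiv.coe_fn_mk, Set.mem_ofPred_eq, neg_mul, mul_comm c a]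
    omega
  have half_turn_mem (p) : (rotate.trans rotate) p ∈ admissible h k ∩ {p | p.1 * p.2.2.1 < 0} ↔
      p ∈ admissible h k ∩ {p | p.1 * p.2.2.1 < 0} := by
    simp only [Equiv.trans_apply, Set.mem_inter_iff, rotate_mem_admissible_iff]
    simp only [rotate, Equiv.coe_fn_mk, Set.mem_ofPred_eq, neg_mul_neg]
  have half_turn_compl : ∀ p ∈ admissible h k ∩ {p | p.1 * p.2.2.1 < 0},
      (rotate.trans rotate) p ∈ {p : ℤ × ℤ × ℤ × ℤ | 0 < p.1} ↔ p ∉ {p | 0 < p.1} := by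
    rintro ⟨a, b, c, d⟩ ⟨⟨-, ha, -⟩, -⟩
    simp only [rotate, Equiv.trans_apply, Equiv.coe_fn_mk, Set.mem_ofPred_eq]
    omega
  rw [finsum_mem_eq_finsum_mem_inter_add finite rotate (fun _ => rotate_mem_admissible_iff)
      rotate_compl,
    finsum_mem_eq_finsum_mem_inter_add (finite.inter_of_left _) (rotate.trans rotate) half_turn_mem
      half_turn_compl]
  rfl

theorem admissibleSum_eq_finsum_sternBrocot {w n : ℕ} (hn : Even n) (hwn : Even (w - n)) {h k : ℤ}
    (hh : 0 < h) (hk : 0 ≤ k) :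
    admissibleSum w n h k = ∑ᶠ x ∈ sternBrocot k (h - k),
      skewMonomial w n ((x.1 * k - x.2.1 * (h - k) : ℤ) : ℂ)
        ((x.2.2.2 * (h - k) - x.2.2.1 * k : ℤ) : ℂ) := by
  rw [admissibleSum, finsum_admissible_eq_finsum_quadrant,
    ← finsum_mem_eq_of_bijOn toQuadrant (bijOn_toQuadrant hh hk) fun _ _ => rfl,
    mul_finsum_mem]
  refine finsum_mem_congr rfl fun x hx => ?_
  rw [admissibleTerm_rotate_rotate hn hwn, admissibleTerm_rotate_rotate hn hwn,
    admissibleTerm_toQuadrant_add_rotate hwn hx]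
  ring

/-! ### Odd symbols -/

/-- `E_{w,n}` without the recentring of `k` modulo `h` in its summand `I_{w,n}`. -/
noncomputable def uncentredSymbol (w n : ℕ) (h k : ℤ) : ℂ :=
  admissibleSum w n h k + Bbar (n + 1) ((k : ℚ) / h) / ((n : ℂ) + 1) * (h : ℂ) ^ w
    - Bbar (w - n + 1) ((k : ℚ) / h) / (((w - n : ℕ) : ℂ) + 1) * (h : ℂ) ^ w

theorem EwnEven_eq_uncentredSymbol (w n : ℕ) {h : ℤ} (hh : 0 < h) (k : ℤ) :
    EwnEven w n h k = uncentredSymbol w n h (k - ⌊(k : ℚ) / h + 1 / 2⌋ * h) := by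
  have hh' : (h : ℚ) ≠ 0 := mod_cast hh.ne'
  rw [EwnEven, uncentredSymbol, Iwn_eq_admissibleSum w n hh, Int.cast_sub, Int.cast_mul, sub_div,
    mul_div_cancel_right₀ _ hh', Bbar_sub_intCast, Bbar_sub_intCast]

theorem uncentredSymbol_neg {w n : ℕ} (hw : Even w) (hn : n ∈ evenDegrees w) (h k : ℤ) :
    uncentredSymbol w n h (-k) = -uncentredSymbol w n h k := by
  obtain ⟨hnw, hn₀, hn_even⟩ := mem_evenDegrees.mp hn
  have hwn_even : Even (w - n) := hw.tsub hn_even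
  rw [uncentredSymbol, uncentredSymbol, admissibleSum_neg hwn_even, Int.cast_neg, neg_div,
    Bbar_neg hn_even.add_one (by omega), Bbar_neg hwn_even.add_one (by omega)]
  ring

theorem uncentredSymbol_eq_add_bernoulliPart (w n : ℕ) {h k : ℤ} (hk : 0 ≤ k) (hkh : k < h) :
    uncentredSymbol w n h k =
      admissibleSum w n h k + (h : ℂ) ^ w * bernoulliPart w n ((k : ℂ) / h) := by
  have hh : (0 : ℚ) < h := mod_cast hk.trans_lt hkh
  have hx₀ : 0 ≤ (k : ℚ) / h := div_nonneg (mod_cast hk) hh.le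
  have hx₁ : (k : ℚ) / h < 1 := (div_lt_one hh).mpr (mod_cast hkh)
  rw [uncentredSymbol, bernoulliPart, Bbar_eq_Bpoly _ hx₀ hx₁, Bbar_eq_Bpoly _ hx₀ hx₁]
  push_cast
  ring

/-- The functions `E` that are `h`-periodic and odd in the second variable and have the polynomial
reciprocity function `g`. Homogeneity is not a field, because `E` inherits it from `g` through the
Euclidean algorithm. -/
structure IsOddSymbol {K : Type*} [Field K] (g : MvPolynomial (Fin 2) K) (E : ℤ → ℤ → K) :
    Prop where
  add_self (h k : ℤ) (hh : 0 < h) : E h (k + h) = E h k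
  neg_right (h k : ℤ) (hh : 0 < h) : E h (-k) = -E h k
  sub_eq_eval (h k : ℤ) (hh : 0 < h) (hk : 0 < k) : E h k - E k (-h) = eval ![(h : K), (k : K)] g

namespace IsOddSymbol

section Field

variable {K : Type*} [Field K] {g : MvPolynomial (Fin 2) K} {E : ℤ → ℤ → K}

theorem add_swap (hE : IsOddSymbol g E) {h k : ℤ} (hh : 0 < h) (hk : 0 < k) :
    E h k + E k h = eval ![(h : K), (k : K)] g := by
  rw [← hE.sub_eq_eval h k hh hk, hE.neg_right k h hk, sub_neg_eq_add]

theorem add_left (hE : IsOddSymbol g E) {h : ℤ} (hh : 0 < h) (k : ℤ) : E h (h + k) = E h k := by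
  rw [add_comm, hE.add_self h k hh]

theorem sub_mul_self (hE : IsOddSymbol g E) {h : ℤ} (hh : 0 < h) (k m : ℤ) :
    E h (k - m * h) = E h k := by
  have periodic : Function.Periodic (E h) h := fun k => hE.add_self h k hh
  exact periodic.sub_zsmul_eq m

theorem add_apply_left (hE : IsOddSymbol g E) {u v : ℤ} (huv : 0 < u + v) :
    E (u + v) u = -E (u + v) v := by
  rw [← hE.neg_right _ v huv, ← hE.add_self _ (-v) huv, neg_add_cancel_comm_assoc]

theorem apply_add_sub_apply (hE : IsOddSymbol g E) {u v : ℤ} (hu : 0 < u) (hv : 0 < v) :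
    E (u + v) u - E v u = eval ![(u : K) + v, (u : K)] g - eval ![(u : K), (v : K)] g := by
  rw [← hE.add_swap hu hv, ← Int.cast_add, ← hE.add_swap (add_pos hu hv) hu, hE.add_left hu]
  ring

variable [CharZero K]

theorem apply_zero_right (hE : IsOddSymbol g E) {h : ℤ} (hh : 0 < h) : E h 0 = 0 := by
  have odd := hE.neg_right h 0 hh
  rwa [neg_zero, self_eq_neg] at odd

theorem isReciprocityForm (hE : IsOddSymbol g E) {w : ℕ} (hg : g.IsHomogeneous w) :
    IsReciprocityForm w g := by
  have swap : g = bind₁ ![X 1, X 0] g := eq_of_eval_eq_of_pos_int fun h k hh hk => by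
    simp only [eval_bind₁_pair, eval_X, Matrix.cons_val_zero, Matrix.cons_val_one]
    rw [← hE.add_swap hh hk, ← hE.add_swap hk hh, add_comm]
  have three_term : g = bind₁ ![X 0, X 0 + X 1] g + bind₁ ![X 1, X 0 + X 1] g :=
    eq_of_eval_eq_of_pos_int fun h k hh hk => by
      have hhk := add_pos hh hk
      simp only [map_add, eval_bind₁_pair, eval_X, Matrix.cons_val_zero, Matrix.cons_val_one]
      rw [← Int.cast_add, ← hE.add_swap hh hk, ← hE.add_swap hh hhk, ← hE.add_swap hk hhk,
        hE.add_left hh, hE.add_self k h hk, hE.add_apply_left hhk]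
      ring
  refine ⟨hg, fun x y => ?_, fun x y => ?_⟩
  · simpa [eval_bind₁_pair] using congrArg (eval ![x, y]) swap
  · simpa [eval_bind₁_pair] using congrArg (eval ![x, y]) three_term

theorem finsum_sternBrocot_evenForm (hE : IsOddSymbol g E) {w : ℕ} (hg : g.IsHomogeneous w)
    (hw : Even w) (hw₀ : 0 < w) {h k : ℤ} (hk : 0 ≤ k) (hkh : k < h) :
    ∑ᶠ x ∈ sternBrocot k (h - k), evenForm g ((x.1 * k - x.2.1 * (h - k) : ℤ) : K)
      ((x.2.2.2 * (h - k) - x.2.2.1 * k : ℤ) : K) = E h k + correction g (h : K) k := by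
  have hg' := hE.isReciprocityForm hg
  have main := finsum_sternBrocot_eq (F := fun u v => E (u + v) u + correction g ((u : K) + v) u)
    (P := fun u v => evenForm g (u : K) v) ?_ ?_ ?_ ?_ hk (sub_pos.mpr hkh).le (by omega)
  · simpa using main
  · intro v hv
    simp only [zero_add, Int.cast_zero, hE.apply_zero_right hv,
      hg'.correction_zero_right hw hw₀]
  · intro u v huv
    have correction_swap := correction_sub_right g ((u : K) + v) v
    rw [add_sub_cancel_right] at correction_swap
    rw [hE.add_apply_left huv, correction_swap, add_comm u v, add_comm (u : K) v, neg_add]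
  · exact fun u v => hg'.evenForm_swap hw hw₀ u v
  · intro u v hu huv
    simp only [Int.cast_sub, add_sub_cancel]
    linear_combination hE.apply_add_sub_apply hu (hu.trans_le huv) +
      hg'.eval_sub_eval_add_correction_sub hw hw₀ (u : K) v

end Field

variable {g : MvPolynomial (Fin 2) ℂ} {E : ℤ → ℤ → ℂ} {w : ℕ} {b : ℕ → ℂ}

theorem apply_eq_sum_uncentredSymbol_of_nonneg (hE : IsOddSymbol g E) (hg : g.IsHomogeneous w)
    (hw : Even w) (hw₀ : 0 < w)
    (hb : ∀ x y : ℂ, evenForm g x y = ∑ n ∈ evenDegrees w, b n * skewMonomial w n x y) {h k : ℤ}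
    (hk : 0 ≤ k) (hkh : k < h) : E h k = ∑ n ∈ evenDegrees w, b n * uncentredSymbol w n h k := by
  have hh : 0 < h := hk.trans_lt hkh
  have hh' : (h : ℂ) ≠ 0 := mod_cast hh.ne'
  have hg' := hE.isReciprocityForm hg
  have even_part : E h k + correction g (h : ℂ) k =
      ∑ n ∈ evenDegrees w, b n * admissibleSum w n h k := by
    rw [← hE.finsum_sternBrocot_evenForm hg hw hw₀ hk hkh,
      finsum_mem_eq_finite_toFinset_sum _ (finite_sternBrocot _ _)]
    simp only [hb]
    rw [Finset.sum_comm]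
    refine Finset.sum_congr rfl fun n hn => ?_
    obtain ⟨-, -, hn_even⟩ := mem_evenDegrees.mp hn
    rw [admissibleSum_eq_finsum_sternBrocot hn_even (hw.tsub hn_even) hh hk, ← Finset.mul_sum,
      finsum_mem_eq_finite_toFinset_sum _ (finite_sternBrocot _ _)]
  have bernoulli_part : correction g (h : ℂ) k =
      -∑ n ∈ evenDegrees w, b n * ((h : ℂ) ^ w * bernoulliPart w n (k / h)) := by
    have homogeneous := hg'.correction_mul (h : ℂ) 1 (k / h)
    rw [mul_one, mul_div_cancel₀ _ hh', hg'.correction_one_eq_sum hw hw₀ hb] at homogeneous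
    rw [homogeneous, mul_neg, Finset.mul_sum]
    simp only [mul_left_comm]
  simp only [uncentredSymbol_eq_add_bernoulliPart w _ hk hkh, mul_add, Finset.sum_add_distrib]
  linear_combination even_part - bernoulli_part

theorem apply_eq_sum_uncentredSymbol (hE : IsOddSymbol g E) (hg : g.IsHomogeneous w)
    (hw : Even w) (hw₀ : 0 < w)
    (hb : ∀ x y : ℂ, evenForm g x y = ∑ n ∈ evenDegrees w, b n * skewMonomial w n x y) {h k : ℤ}
    (hkh : |k| < h) : E h k = ∑ n ∈ evenDegrees w, b n * uncentredSymbol w n h k := by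
  obtain ⟨hk_gt, hk_lt⟩ := abs_lt.mp hkh
  obtain hk | hk := le_total 0 k
  · exact hE.apply_eq_sum_uncentredSymbol_of_nonneg hg hw hw₀ hb hk hk_lt
  · have at_neg := hE.apply_eq_sum_uncentredSymbol_of_nonneg hg hw hw₀ hb (neg_nonneg.mpr hk)
      (neg_lt.mp hk_gt)
    rw [hE.neg_right h k ((abs_nonneg k).trans_lt hkh), neg_eq_iff_eq_neg,
      ← Finset.sum_neg_distrib] at at_neg
    rw [at_neg]
    exact Finset.sum_congr rfl fun n hn => by
      rw [uncentredSymbol_neg hw hn, mul_neg, neg_neg]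

end IsOddSymbol

theorem abs_sub_floor_mul_lt {h : ℤ} (hh : 0 < h) (k : ℤ) :
    |k - ⌊(k : ℚ) / h + 1 / 2⌋ * h| < h := by
  have hh' : (0 : ℚ) < h := mod_cast hh
  have nearest : |(k : ℚ) / h - ⌊(k : ℚ) / h + 1 / 2⌋| < 1 := by
    rw [← round_eq]
    exact (abs_sub_round _).trans_lt one_half_lt_one
  have scaled : |(k : ℚ) - ⌊(k : ℚ) / h + 1 / 2⌋ * h| < h := by
    calc |(k : ℚ) - ⌊(k : ℚ) / h + 1 / 2⌋ * h|
        = |(k : ℚ) / h - ⌊(k : ℚ) / h + 1 / 2⌋| * h := by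
          rw [← abs_of_pos hh', ← abs_mul, abs_of_pos hh', sub_mul, div_mul_cancel₀ _ hh'.ne']
      _ < h := mul_lt_of_lt_one_left hh' nearest
  exact_mod_cast scaled

/-- An odd weighted Dedekind symbol of weight `w` with polynomial reciprocity function
is a linear combination of the symbols `E_{w,n}` for even `n`, `0 < n < w`. -/
theorem odd_symbol_linear_combination (w : ℕ) (hw : Even w) (hw0 : 0 < w)
    (E : ℤ → ℤ → ℂ) (hE : IsDedekindSymbol w E)
    (hodd : ∀ h k : ℤ, 0 < h → E h (-k) = -E h k)
    (g : MvPolynomial (Fin 2) ℂ) (hg : g.IsHomogeneous w)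
    (hrec : ∀ h k : ℤ, 0 < h → 0 < k →
      E h k - E k (-h) = eval ![(h : ℂ), (k : ℂ)] g) :
    ∃ c : ℕ → ℂ, ∀ h k : ℤ, 0 < h →
      E h k = ∑ n ∈ (Finset.range w).filter (fun n => 0 < n ∧ Even n),
        c n * EwnEven w n h k := by
  have symbol : IsOddSymbol g E := ⟨hE.1, hodd, hrec⟩
  obtain ⟨b, hb⟩ := (symbol.isReciprocityForm hg).exists_evenForm_eq_sum hw hw0
  refine ⟨b, fun h k hh => ?_⟩
  rw [← symbol.sub_mul_self hh k ⌊(k : ℚ) / h + 1 / 2⌋,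
    symbol.apply_eq_sum_uncentredSymbol hg hw hw0 hb (abs_sub_floor_mul_lt hh k)]
  exact Finset.sum_congr rfl fun n _ => by rw [EwnEven_eq_uncentredSymbol w n hh]
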